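/- The operations Z and 𝓘 give an inclusion-reversing bijection between real radically closed ideals in ℝ[X₁,...,Xₙ] (ideals I with I = ʳ√I) and real algebraic subsets of ℝⁿ. -/

import Mathlib

/-- The zero set of an ideal of real polynomials. -/
def zeroSet (n : ℕ) (I : Ideal (MvPolynomial (Fin n) ℝ)) : Set (Fin n → ℝ) :=
  {x | ∀ g ∈ I, MvPolynomial.eval x g = 0}

/-- The real radical of an ideal. -/
def realRadical (n : ℕ) (I : Ideal (MvPolynomial (Fin n) ℝ)) : Set (MvPolynomial (Fin n) ℝ) :=
  {g | ∃ k : ℕ, 1 ≤ k ∧ ∃ (ℓ : ℕ) (gi : Fin ℓ → MvPolynomial (Fin n) ℝ),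
    g ^ (2 * k) + ∑ i, (gi i) ^ 2 ∈ I}

/-- The ideal of polynomials vanishing on a subset `X ⊆ ℝⁿ`. -/
noncomputable def vanishingIdeal (n : ℕ) (X : Set (Fin n → ℝ)) : Ideal (MvPolynomial (Fin n) ℝ) where
  carrier := {g | ∀ x ∈ X, MvPolynomial.eval x g = 0}
  add_mem' := by
    intro a b ha hb x hx
    simp [map_add, ha x hx, hb x hx]
  zero_mem' := by
    intro x _
    simp
  smul_mem' := by
    intro c a ha x hx
    simp [smul_eq_mul, ha x hx]

/-!
Let `K` be a real closed field, given as an ordered field whose polynomials have the intermediate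
value property. The inclusion `ʳ√I ⊆ 𝓘(Z(I))` holds because a sum of squares vanishes only if its
terms do. Conversely, if `f ∉ ʳ√I`, then `-1` is not a sum of squares in the finitely generated
`K`-algebra `B = (K[X] ⧸ I)_f`, and it suffices to find a `K`-algebra homomorphism `B → K`: the
images of the variables are then the coordinates of a point of `Z(I)` at which `f` does not vanish.

* As `-1` is not a sum of squares in `B`, it is not one in the residue fields of `(1 + ΣB²)⁻¹B`
  either. By Artin and Schreier such a field embeds into a real closed field `R`, and therefore `B`
  has an `R`-valued point.
* By the Tarski–Seidenberg principle this point can be moved to `K`. The principle is proved by the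
  Cohen–Hörmander method: the sign table of a finite family of polynomials, closed under
  derivatives, removal of leading terms and pseudo-division, depends only on the signs of the
  leading coefficients.
-/

open Polynomial Set Filter

/-- The intermediate value property for polynomials. Among ordered fields it characterizes the real
closed ones, and it is the form in which real closedness is used throughout. -/
def PolynomialIVP (R : Type*) [Field R] [LinearOrder R] : Prop :=
  ∀ (p : R[X]) ⦃a b : R⦄, a < b → p.eval a * p.eval b < 0 → ∃ c ∈ Ioo a b, p.eval c = 0

section OrderedField

variable {R : Type*} [Field R] [LinearOrder R] [IsStrictOrderedRing R]

theorem tendsto_eval_atTop_of_leadingCoeff_pos {p : R[X]} (hdeg : 0 < p.natDegree)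
    (hlc : 0 < p.leadingCoeff) : Tendsto (fun x => p.eval x) atTop atTop := by
  induction hn : p.natDegree using Nat.strong_induction_on generalizing p with
  | _ n ih =>
    have heval : (fun x => p.eval x) = fun x => p.divX.eval x * x + p.coeff 0 := by
      ext x
      conv_lhs => rw [← divX_mul_X_add p]
      simp
    have hlc' : p.divX.leadingCoeff = p.leadingCoeff := by
      rw [leadingCoeff, natDegree_divX_eq_natDegree_tsub_one, coeff_divX, Nat.sub_add_cancel hdeg]
      rfl
    rw [heval]
    refine tendsto_atTop_add_const_right _ _ ?_
    rcases Nat.eq_zero_or_pos p.divX.natDegree with h0 | hpos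
    · rw [eq_C_of_natDegree_eq_zero h0] at hlc' ⊢
      rw [leadingCoeff_C] at hlc'
      simpa only [eval_C, hlc', id_eq] using tendsto_id.const_mul_atTop hlc
    · refine (ih _ ?_ hpos (hlc'.symm ▸ hlc) rfl).atTop_mul_atTop₀ tendsto_id
      rw [natDegree_divX_eq_natDegree_tsub_one]
      omega

theorem exists_mem_Ioo_eval_pos {p : R[X]} {a b : R} (hab : a < b) (hb : 0 < p.eval b) :
    ∃ c ∈ Ioo a b, 0 < p.eval c := by
  let _ := Preorder.topology R
  have : OrderTopology R := ⟨rfl⟩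
  have hpos : ∀ᶠ c in nhdsWithin b (Iio b), 0 < p.eval c :=
    (p.continuous.tendsto b).mono_left nhdsWithin_le_nhds |>.eventually (lt_mem_nhds hb)
  have := nhdsLT_neBot_of_exists_lt ⟨a, hab⟩
  obtain ⟨c, hc, hmem⟩ := (hpos.and (Ioo_mem_nhdsLT hab)).exists
  exact ⟨c, hmem, hc⟩

namespace PolynomialIVP

variable (hR : PolynomialIVP R)
include hR

theorem exists_root_mem_Icc {p : R[X]} {a b : R} (hab : a ≤ b) (h : p.eval a * p.eval b ≤ 0) :
    ∃ c ∈ Icc a b, p.eval c = 0 := by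
  rcases h.lt_or_eq with h | h
  · obtain rfl | hab := hab.eq_or_lt
    · exact absurd h (mul_self_nonneg _).not_gt
    · obtain ⟨c, hc, hroot⟩ := hR p hab h
      exact ⟨c, Ioo_subset_Icc_self hc, hroot⟩
  · rcases mul_eq_zero.1 h with h | h
    · exact ⟨a, left_mem_Icc.2 hab, h⟩
    · exact ⟨b, right_mem_Icc.2 hab, h⟩

theorem exists_root_mem_uIcc {p : R[X]} {a b : R} (ha : p.eval a ≤ 0) (hb : 0 ≤ p.eval b) :
    ∃ c ∈ uIcc a b, p.eval c = 0 := by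
  rcases le_total a b with hab | hab
  · rw [uIcc_of_le hab]
    exact hR.exists_root_mem_Icc hab (mul_nonpos_of_nonpos_of_nonneg ha hb)
  · rw [uIcc_of_ge hab]
    exact hR.exists_root_mem_Icc hab (mul_nonpos_of_nonneg_of_nonpos hb ha)

theorem sign_eval_eq {p : R[X]} {s : Set R} (hs : s.OrdConnected)
    (h : ∀ c ∈ s, p.eval c ≠ 0) {x y : R} (hx : x ∈ s) (hy : y ∈ s) :
    SignType.sign (p.eval x) = SignType.sign (p.eval y) := by
  have key : ∀ {x y : R}, x ∈ s → y ∈ s → 0 < p.eval y → 0 < p.eval x := by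
    intro x y hx hy hpos
    by_contra! hle
    obtain ⟨c, hc, hroot⟩ := hR.exists_root_mem_uIcc hle hpos.le
    exact h c (hs.uIcc_subset hx hy hc) hroot
  rcases (h y hy).lt_or_gt with hneg | hpos
  · have := (h x hx).lt_or_gt.resolve_right fun hpos => hneg.not_gt (key hy hx hpos)
    rw [sign_neg this, sign_neg hneg]
  · rw [sign_pos (key hx hy hpos), sign_pos hpos]

theorem exists_first_root {p : R[X]} {a b : R} (hab : a ≤ b) (ha : 0 < p.eval a)
    (hb : p.eval b ≤ 0) : ∃ c ∈ Ioc a b, p.eval c = 0 ∧ ∀ x ∈ Ico a c, 0 < p.eval x := by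
  have hp : p ≠ 0 := by rintro rfl; simp at ha
  obtain ⟨c, ⟨hc, hroot⟩, hmin⟩ : ∃ c, Minimal (fun c => c ∈ Icc a b ∧ p.eval c = 0) c := by
    refine Set.Finite.exists_minimal ?_
      (hR.exists_root_mem_Icc hab (mul_nonpos_of_nonneg_of_nonpos ha.le hb))
    exact (p.roots.toFinset.finite_toSet).subset fun c hc => by simp [hp, hc.2]
  have hac : a < c := hc.1.lt_of_ne (by rintro rfl; exact ha.ne' hroot)
  refine ⟨c, ⟨hac, hc.2⟩, hroot, fun x hx => ?_⟩
  by_contra! hle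
  obtain ⟨d, hd, hdroot⟩ := hR.exists_root_mem_Icc hx.1 (mul_nonpos_of_nonneg_of_nonpos ha.le hle)
  have hdc := hd.2.trans_lt hx.2
  exact hdc.not_ge (hmin ⟨⟨hd.1, hdc.le.trans hc.2⟩, hdroot⟩ hdc.le)

-- At the first return `c` of `p` to its value at `a`, the cofactor `r` of `X - c` in `p - p(a)` is
-- positive, whereas just before `c` it must be negative.
theorem eval_lt_eval_of_derivative_pos {p : R[X]} {a b : R} (hab : a < b)
    (h : ∀ c ∈ Icc a b, 0 < p.derivative.eval c) : p.eval a < p.eval b := by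
  by_contra! hle
  obtain ⟨q, hq⟩ : X - C a ∣ p - C (p.eval a) := dvd_iff_isRoot.2 (by simp)
  have hqa : 0 < q.eval a := by
    have hder : p.derivative.eval a = q.eval a := by
      simpa using congrArg (fun r => r.derivative.eval a) hq
    exact hder ▸ h a (left_mem_Icc.2 hab.le)
  have hqb : q.eval b ≤ 0 := by
    have heval : p.eval b - p.eval a = (b - a) * q.eval b := by simpa using congrArg (eval b) hq
    exact nonpos_of_mul_nonpos_right (heval.symm.trans_le (sub_nonpos.2 hle)) (sub_pos.2 hab)
  obtain ⟨c, hc, hroot, hpos⟩ := hR.exists_first_root hab.le hqa hqb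
  obtain ⟨r, hr⟩ : X - C c ∣ q := dvd_iff_isRoot.2 hroot
  have hrc : 0 < r.eval c := by
    have hder : p.derivative.eval c = (c - a) * r.eval c := by
      simpa [hr] using congrArg (fun r => r.derivative.eval c) hq
    exact pos_of_mul_pos_right (hder ▸ h c (Ioc_subset_Icc_self hc)) (sub_pos.2 hc.1).le
  obtain ⟨d, hd, hrd⟩ := exists_mem_Ioo_eval_pos hc.1 hrc
  have hqd := hpos d (Ioo_subset_Ico_self hd)
  rw [hr, eval_mul, eval_sub, eval_X, eval_C] at hqd
  exact hqd.not_ge (mul_nonpos_of_nonpos_of_nonneg (sub_nonpos.2 hd.2.le) hrd.le)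

theorem eval_lt_eval_of_derivative_pos_Ico {p : R[X]} {a b : R} (hab : a < b)
    (h : ∀ c ∈ Ico a b, 0 < p.derivative.eval c) : p.eval a < p.eval b := by
  obtain ⟨m, ham, hmb⟩ := exists_between hab
  refine (hR.eval_lt_eval_of_derivative_pos ham
    fun c hc => h c ⟨hc.1, hc.2.trans_lt hmb⟩).trans_le ?_
  by_contra! hlt
  obtain ⟨d, hd, hpd⟩ := exists_mem_Ioo_eval_pos (p := C (p.eval m) - p) hmb (by simpa using hlt)
  have := hR.eval_lt_eval_of_derivative_pos hd.1
    fun c hc => h c ⟨ham.le.trans hc.1, hc.2.trans_lt hd.2⟩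
  exact this.not_gt (by simpa using hpd)

theorem exists_derivative_eval_eq_slope (p : R[X]) {a b : R} (hab : a < b) :
    ∃ c ∈ Icc a b, p.derivative.eval c * (b - a) = p.eval b - p.eval a := by
  set q : R[X] := p * C (b - a) - C (p.eval b - p.eval a) * X with hq
  have hqab : q.eval a = q.eval b := by
    simp only [hq, eval_sub, eval_mul, eval_C, eval_X]
    ring
  have hq' : ∀ c, q.derivative.eval c =
      p.derivative.eval c * (b - a) - (p.eval b - p.eval a) := fun c => by simp [hq]
  by_contra! h
  have hne : ∀ c ∈ Icc a b, q.derivative.eval c ≠ 0 := fun c hc => by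
    rw [hq']; exact sub_ne_zero.2 (h c hc)
  have hsign := fun c (hc : c ∈ Icc a b) =>
    hR.sign_eval_eq ordConnected_Icc hne hc (left_mem_Icc.2 hab.le)
  rcases (hne a (left_mem_Icc.2 hab.le)).lt_or_gt with hneg | hpos
  · have := hR.eval_lt_eval_of_derivative_pos (p := -q) hab fun c hc => by
      rw [derivative_neg, eval_neg, neg_pos, ← sign_eq_neg_one_iff, hsign c hc, sign_neg hneg]
    simp [hqab] at this
  · have := hR.eval_lt_eval_of_derivative_pos (p := q) hab fun c hc => by
      rw [← sign_eq_one_iff, hsign c hc, sign_pos hpos]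
    exact this.ne hqab

theorem monotoneOn_of_derivative_nonneg {p : R[X]} {s : Set R} (hs : s.OrdConnected)
    (h : ∀ c ∈ s, 0 ≤ p.derivative.eval c) : MonotoneOn (fun x => p.eval x) s := by
  intro x hx y hy hxy
  obtain rfl | hxy := hxy.eq_or_lt
  · rfl
  obtain ⟨c, hc, hslope⟩ := hR.exists_derivative_eval_eq_slope p hxy
  exact sub_nonneg.1 (hslope ▸ mul_nonneg (h c (hs.out hx hy hc)) (sub_pos.2 hxy).le)

theorem exists_sq_eq {a : R} (ha : 0 ≤ a) : ∃ b, b ^ 2 = a := by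
  obtain ⟨b, -, hb⟩ := hR.exists_root_mem_uIcc (p := X ^ 2 - C a) (a := 0) (b := a + 1)
    (by simpa using ha) (by simp only [eval_sub, eval_pow, eval_X, eval_C]; nlinarith)
  exact ⟨b, by simpa [sub_eq_zero] using hb⟩

theorem sign_map {S : Type*} [Field S] [LinearOrder S] [IsStrictOrderedRing S] (f : R →+* S)
    (a : R) : SignType.sign (f a) = SignType.sign a := by
  have hpos : ∀ {a : R}, 0 < a → 0 < f a := by
    intro a ha
    obtain ⟨b, rfl⟩ := hR.exists_sq_eq ha.le
    have hb : b ≠ 0 := by rintro rfl; simp at ha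
    rw [map_pow]
    exact sq_pos_of_ne_zero ((map_ne_zero f).2 hb)
  rcases lt_trichotomy a 0 with ha | rfl | ha
  · rw [sign_neg ha, sign_neg]
    simpa using hpos (neg_pos.2 ha)
  · simp
  · rw [sign_pos ha, sign_pos (hpos ha)]

theorem exists_eval_pos_of_derivative_pos {p : R[X]} {a : R}
    (h : ∀ c ∈ Ici a, 0 < p.derivative.eval c) : ∃ c ∈ Ici a, 0 < p.eval c := by
  have hmono := hR.monotoneOn_of_derivative_nonneg ordConnected_Ici fun c hc => (h c hc).le
  have hdeg : 0 < p.natDegree := by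
    by_contra! h0
    simpa [derivative_of_natDegree_zero (Nat.le_zero.1 h0)] using h a self_mem_Ici
  have hlc : p.leadingCoeff ≠ 0 := leadingCoeff_ne_zero.2 (by rintro rfl; simp at hdeg)
  rcases hlc.lt_or_gt with hneg | hpos
  · have htends := tendsto_eval_atTop_of_leadingCoeff_pos (p := -p) (by simpa using hdeg)
      (by simpa using hneg)
    obtain ⟨c, hlt, hac⟩ :=
      ((htends.eventually_gt_atTop (-p.eval a)).and (eventually_ge_atTop a)).exists
    rw [eval_neg, neg_lt_neg_iff] at hlt
    exact absurd (hmono self_mem_Ici hac hac) hlt.not_ge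
  · obtain ⟨c, hc, hac⟩ := ((tendsto_eval_atTop_of_leadingCoeff_pos hdeg hpos).eventually_gt_atTop 0
      |>.and (eventually_ge_atTop a)).exists
    exact ⟨c, hac, hc⟩

end PolynomialIVP

end OrderedField

theorem polynomialIVP_real : PolynomialIVP ℝ := by
  intro p a b hab h
  rcases mul_neg_iff.1 h with ⟨ha, hb⟩ | ⟨ha, hb⟩
  · exact intermediate_value_Ioo' hab.le p.continuous.continuousOn ⟨hb, ha⟩
  · exact intermediate_value_Ioo hab.le p.continuous.continuousOn ⟨ha, hb⟩

theorem sign_eq_of_monotoneOn {R S : Type*} [LinearOrder R] [Zero R] [LinearOrder S] [Zero S]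
    {p : R → R} {q : S → S} {x x' : R} {y y' : S}
    (hp : MonotoneOn p (uIcc x x')) (hq : MonotoneOn q (Icc y y'))
    (hxy : SignType.sign (p x) = SignType.sign (q y))
    (hxy' : SignType.sign (p x') = SignType.sign (q y'))
    (hconst : x ≤ x' → SignType.sign (p x) = SignType.sign (p x')) {z : S}
    (hz : z ∈ Icc y y') : SignType.sign (q z) = SignType.sign (q y) := by
  have hle := hz.1.trans hz.2
  refine le_antisymm ?_ (SignType.sign.monotone (hq (left_mem_Icc.2 hle) hz hz.1))
  refine (SignType.sign.monotone (hq hz (right_mem_Icc.2 hle) hz.2)).trans ?_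
  rw [← hxy, ← hxy']
  rcases le_total x x' with h | h
  · exact (hconst h).ge
  · exact SignType.sign.monotone (hp right_mem_uIcc left_mem_uIcc h)

section SignMatching

variable {R S ι : Type*} [Field R] [LinearOrder R] [Field S] [LinearOrder S]

/-- Every polynomial of the family `(f i)_{i ∈ T}` has constant sign on `s`. -/
def SignConstOn (f : ι → R[X]) (T : Set ι) (s : Set R) : Prop :=
  ∀ i ∈ T, ∀ x ∈ s, ∀ y ∈ s, SignType.sign ((f i).eval x) = SignType.sign ((f i).eval y)

/-- A break of the family `(f i)_{i ∈ T}`: a root of one of its nonzero members. The breaks cut the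
line into the cells on which the family has constant signs. -/
def IsBreak (f : ι → R[X]) (T : Set ι) (x : R) : Prop :=
  ∃ i ∈ T, f i ≠ 0 ∧ (f i).eval x = 0

/-- `ρ` is the incidence relation of an order isomorphism, preserving the signs of the polynomials,
from the cells of the family `(f i)_{i ∈ T}` to those of the family `(g i)_{i ∈ T}`. The order of
the cells is encoded by intervals: the signs are constant on `Icc x x'`, which is empty if `x' < x`,
exactly when the cell of `x'` equals or precedes the cell of `x`. -/
structure SignMatching (f : ι → R[X]) (g : ι → S[X]) (T : Set ι) (ρ : R → S → Prop) : Prop where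
  exists_right (x : R) : ∃ y, ρ x y
  exists_left (y : S) : ∃ x, ρ x y
  sign_eq {x : R} {y : S} (h : ρ x y) {i : ι} (hi : i ∈ T) :
    SignType.sign ((f i).eval x) = SignType.sign ((g i).eval y)
  signConstOn_Icc_iff {x x' : R} {y y' : S} (h : ρ x y) (h' : ρ x' y') :
    SignConstOn f T (Icc x x') ↔ SignConstOn g T (Icc y y')
  congr_left {x x' : R} {y : S} (h : ρ x y) (hx : SignConstOn f T (uIcc x x')) : ρ x' y
  congr_right {x : R} {y y' : S} (h : ρ x y) (hy : SignConstOn g T (uIcc y y')) : ρ x y'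

section SignConstOn

variable {f : ι → R[X]} {T : Set ι}

theorem SignConstOn.mono {s t : Set R} (h : SignConstOn f T t) (hst : s ⊆ t) :
    SignConstOn f T s :=
  fun i hi x hx y hy => h i hi x (hst hx) y (hst hy)

theorem signConstOn_of_subsingleton {s : Set R} (hs : s.Subsingleton) : SignConstOn f T s :=
  fun i _ x hx y hy => by rw [hs hx hy]

theorem signConstOn_comp_neg_X {s : Set R} :
    SignConstOn (fun i => (f i).comp (-X)) T s ↔ SignConstOn f T (-s) := by
  constructor <;> intro h i hi x hx y hy <;>
    simpa using h i hi (-x) (by simpa using hx) (-y) (by simpa using hy)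

omit [LinearOrder R] in
theorem isBreak_comp_neg_X {x : R} :
    IsBreak (fun i => (f i).comp (-X)) T x ↔ IsBreak f T (-x) := by
  simp [IsBreak]

theorem finite_setOf_isBreak (hT : T.Finite) : {x | IsBreak f T x}.Finite := by
  have hsub : {x | IsBreak f T x} ⊆ ⋃ i ∈ T, ((f i).roots.toFinset : Set R) := by
    rintro x ⟨i, hi, h0, hx⟩
    exact mem_biUnion hi (by simp [h0, hx])
  exact (hT.biUnion fun i _ => Finset.finite_toSet _).subset hsub

theorem IsBreak.not_signConstOn_Icc [IsStrictOrderedRing R] {x a b : R} (hx : IsBreak f T x)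
    (hab : a < b) (hxab : x ∈ Icc a b) : ¬ SignConstOn f T (Icc a b) := by
  intro h
  obtain ⟨i, hi, h0, hroot⟩ := hx
  refine h0 (eq_zero_of_infinite_isRoot _ ((Icc_infinite hab).mono fun z hz => ?_))
  rw [mem_ofPred_eq, IsRoot.def, ← sign_eq_zero_iff, h i hi z hz x hxab, hroot, sign_zero]

theorem signConstOn_of_forall_not_isBreak [IsStrictOrderedRing R] (hR : PolynomialIVP R) {s : Set R}
    (hs : s.OrdConnected) (h : ∀ x ∈ s, ¬ IsBreak f T x) : SignConstOn f T s := by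
  intro i hi x hx y hy
  by_cases h0 : f i = 0
  · simp [h0]
  · exact hR.sign_eval_eq hs (fun c hc hroot => h c hc ⟨i, hi, h0, hroot⟩) hx hy

end SignConstOn

namespace SignMatching

variable {f : ι → R[X]} {g : ι → S[X]} {T : Set ι} {ρ : R → S → Prop}

theorem symm (M : SignMatching f g T ρ) : SignMatching g f T fun y x => ρ x y where
  exists_right := M.exists_left
  exists_left := M.exists_right
  sign_eq h _ hi := (M.sign_eq h hi).symm
  signConstOn_Icc_iff h h' := (M.signConstOn_Icc_iff h h').symm
  congr_left := M.congr_right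
  congr_right := M.congr_left

variable [IsStrictOrderedRing R] [IsStrictOrderedRing S]

theorem comp_neg_X (M : SignMatching f g T ρ) :
    SignMatching (fun i => (f i).comp (-X)) (fun i => (g i).comp (-X)) T
      fun x y => ρ (-x) (-y) where
  exists_right x := (M.exists_right (-x)).imp' Neg.neg fun y h => by rwa [neg_neg]
  exists_left y := (M.exists_left (-y)).imp' Neg.neg fun x h => by rwa [neg_neg]
  sign_eq h _ hi := by simpa using M.sign_eq h hi
  signConstOn_Icc_iff h h' := by
    simpa [signConstOn_comp_neg_X] using M.signConstOn_Icc_iff h' h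
  congr_left h hx := M.congr_left h (by simpa [signConstOn_comp_neg_X] using hx)
  congr_right h hy := M.congr_right h (by simpa [signConstOn_comp_neg_X] using hy)

omit [IsStrictOrderedRing R] in
theorem eq_zero (M : SignMatching f g T ρ) {i : ι} (hi : i ∈ T) (h0 : f i = 0) : g i = 0 := by
  refine eq_zero_of_infinite_isRoot _ (infinite_univ.mono fun y _ => ?_)
  obtain ⟨x, hxy⟩ := M.exists_left y
  rw [mem_ofPred_eq, IsRoot.def, ← sign_eq_zero_iff, ← M.sign_eq hxy hi, h0, eval_zero, sign_zero]

theorem isBreak_iff (M : SignMatching f g T ρ) {x : R} {y : S} (h : ρ x y) :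
    IsBreak f T x ↔ IsBreak g T y := by
  refine exists_congr fun i => and_congr_right fun hi => and_congr ?_ ?_
  · exact not_congr ⟨M.eq_zero hi, M.symm.eq_zero hi⟩
  · rw [← sign_eq_zero_iff, M.sign_eq h hi, sign_eq_zero_iff]

omit [IsStrictOrderedRing S] in
theorem lt_of_lt (M : SignMatching f g T ρ) {x x' b : R} {y y' : S} (h : ρ x y) (h' : ρ x' y')
    (hlt : x < x') (hb : IsBreak f T b) (hbx : b ∈ Icc x x') : y < y' := by
  by_contra! hle
  refine hb.not_signConstOn_Icc hlt hbx ((M.signConstOn_Icc_iff h h').2 ?_)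
  exact signConstOn_of_subsingleton (subsingleton_Icc_of_ge hle)

theorem not_isBreak_of_mem_Ico (M : SignMatching f g T ρ) {x b : R} {y b' : S} (hxy : ρ x y)
    (hbb' : ρ b b') (hx : ¬ IsBreak f T x) (hf : ∀ z ∈ Ioo x b, ¬ IsBreak f T z) {z : S}
    (hz : z ∈ Ico y b') : ¬ IsBreak g T z := by
  intro hzbreak
  obtain ⟨w, hwz⟩ := M.exists_left z
  have hyz : y < z := hz.1.lt_of_ne (by rintro rfl; exact hx ((M.isBreak_iff hxy).2 hzbreak))
  have hxw : x < w := M.symm.lt_of_lt hxy hwz hyz hzbreak (right_mem_Icc.2 hyz.le)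
  have hwb : w < b := M.symm.lt_of_lt hwz hbb' hz.2 hzbreak (left_mem_Icc.2 hz.2.le)
  exact hf w ⟨hxw, hwb⟩ ((M.isBreak_iff hwz).2 hzbreak)

section Cell

variable (hR : PolynomialIVP R) (hS : PolynomialIVP S) (hT : T.Finite)
include hR hS hT

theorem exists_right_eval_pos (M : SignMatching f g T ρ) {p : R[X]} {q : S[X]} {x : R} {y : S}
    (hxy : ρ x y) (hx : ¬ IsBreak f T x)
    (hp : ∀ z, SignConstOn f T (uIcc x z) → 0 < p.derivative.eval z)
    (hq : ∀ z, SignConstOn g T (uIcc y z) → 0 < q.derivative.eval z)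
    (hbreak : ∀ b b', ρ b b' → IsBreak f T b →
      SignType.sign (p.eval b) = SignType.sign (q.eval b'))
    (h0 : 0 ≤ p.eval x) : ∃ z, SignConstOn g T (uIcc y z) ∧ 0 < q.eval z := by
  by_cases hex : ∃ b, x < b ∧ IsBreak f T b
  · obtain ⟨b, ⟨hxb, hb⟩, hmin⟩ : ∃ b, Minimal (fun b => x < b ∧ IsBreak f T b) b :=
      Set.Finite.exists_minimal ((finite_setOf_isBreak hT).subset fun b hb => hb.2) hex
    obtain ⟨b', hbb'⟩ := M.exists_right b
    have hyb : y < b' := M.lt_of_lt hxy hbb' hxb hb (right_mem_Icc.2 hxb.le)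
    have hf : ∀ z ∈ Ioo x b, ¬ IsBreak f T z := fun z hz hzbreak =>
      hz.2.not_ge (hmin ⟨hz.1, hzbreak⟩ hz.2.le)
    have hpb : p.eval x < p.eval b := hR.eval_lt_eval_of_derivative_pos_Ico hxb fun z hz => by
      refine hp z (signConstOn_of_forall_not_isBreak hR ordConnected_uIcc fun w hw => ?_)
      rw [uIcc_of_le hz.1] at hw
      rcases hw.1.eq_or_lt with rfl | hxw
      exacts [hx, hf w ⟨hxw, hw.2.trans_lt hz.2⟩]
    have hqb : 0 < q.eval b' := by
      rw [← sign_eq_one_iff, ← hbreak b b' hbb' hb, sign_pos (h0.trans_lt hpb)]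
    obtain ⟨z, hz, hqz⟩ := exists_mem_Ioo_eval_pos hyb hqb
    refine ⟨z, signConstOn_of_forall_not_isBreak hS ordConnected_uIcc fun w hw => ?_, hqz⟩
    rw [uIcc_of_le hz.1.le] at hw
    exact M.not_isBreak_of_mem_Ico hxy hbb' hx hf ⟨hw.1, hw.2.trans_lt hz.2⟩
  · have hg : ∀ z ∈ Ici y, SignConstOn g T (uIcc y z) := fun z hz => by
      refine signConstOn_of_forall_not_isBreak hS ordConnected_uIcc fun w hw hwbreak => ?_
      rw [uIcc_of_le hz] at hw
      obtain ⟨v, hvw⟩ := M.exists_left w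
      have hyw : y < w :=
        hw.1.lt_of_ne (by rintro rfl; exact hx ((M.isBreak_iff hxy).2 hwbreak))
      exact hex ⟨v, M.symm.lt_of_lt hxy hvw hyw hwbreak (right_mem_Icc.2 hyw.le),
        (M.isBreak_iff hvw).2 hwbreak⟩
    obtain ⟨z, hz, hqz⟩ := hS.exists_eval_pos_of_derivative_pos fun z hz => hq z (hg z hz)
    exact ⟨z, hg z hz, hqz⟩

theorem exists_right_eval_neg (M : SignMatching f g T ρ) {p : R[X]} {q : S[X]} {x : R} {y : S}
    (hxy : ρ x y) (hx : ¬ IsBreak f T x)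
    (hp : ∀ z, SignConstOn f T (uIcc x z) → 0 < p.derivative.eval z)
    (hq : ∀ z, SignConstOn g T (uIcc y z) → 0 < q.derivative.eval z)
    (hbreak : ∀ b b', ρ b b' → IsBreak f T b →
      SignType.sign (p.eval b) = SignType.sign (q.eval b'))
    (h0 : p.eval x ≤ 0) : ∃ z, SignConstOn g T (uIcc y z) ∧ q.eval z < 0 := by
  obtain ⟨z, hz, hqz⟩ := M.comp_neg_X.exists_right_eval_pos hR hS hT (x := -x) (y := -y)
    (p := -p.comp (-X)) (q := -q.comp (-X)) (by simpa) (by simpa [isBreak_comp_neg_X])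
    (fun z hz => by
      simpa [derivative_comp] using hp (-z) (by simpa [signConstOn_comp_neg_X] using hz))
    (fun z hz => by
      simpa [derivative_comp] using hq (-z) (by simpa [signConstOn_comp_neg_X] using hz))
    (fun b b' h hb => by
      simpa [Left.sign_neg] using hbreak _ _ h (isBreak_comp_neg_X.1 hb))
    (by simpa using h0)
  exact ⟨-z, by simpa [signConstOn_comp_neg_X] using hz, by simpa using hqz⟩

theorem exists_right_sign_eq_of_derivative_pos (M : SignMatching f g T ρ) {p : R[X]} {q : S[X]}
    {x : R} {y : S} (hxy : ρ x y) (hx : ¬ IsBreak f T x)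
    (hp : ∀ z, SignConstOn f T (uIcc x z) → 0 < p.derivative.eval z)
    (hq : ∀ z, SignConstOn g T (uIcc y z) → 0 < q.derivative.eval z)
    (hbreak : ∀ b b', ρ b b' → IsBreak f T b →
      SignType.sign (p.eval b) = SignType.sign (q.eval b')) :
    ∃ z, SignConstOn g T (uIcc y z) ∧ SignType.sign (p.eval x) = SignType.sign (q.eval z) := by
  have hpos := M.exists_right_eval_pos hR hS hT hxy hx hp hq hbreak
  have hneg := M.exists_right_eval_neg hR hS hT hxy hx hp hq hbreak
  rcases lt_trichotomy (p.eval x) 0 with h0 | h0 | h0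
  · obtain ⟨z, hz, hqz⟩ := hneg h0.le
    exact ⟨z, hz, by rw [sign_neg h0, sign_neg hqz]⟩
  · obtain ⟨z₁, hz₁, hq₁⟩ := hneg h0.le
    obtain ⟨z₂, hz₂, hq₂⟩ := hpos h0.ge
    obtain ⟨z, hz, hqz⟩ := hS.exists_root_mem_uIcc hq₁.le hq₂.le
    refine ⟨z, ?_, by rw [h0, hqz, sign_zero, sign_zero]⟩
    rcases uIcc_subset_uIcc_union_uIcc (b := y) hz with hz | hz
    · exact hz₁.mono (uIcc_subset_uIcc_left (uIcc_comm z₁ y ▸ hz))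
    · exact hz₂.mono (uIcc_subset_uIcc_left hz)
  · obtain ⟨z, hz, hqz⟩ := hpos h0.le
    exact ⟨z, hz, by rw [sign_pos h0, sign_pos hqz]⟩

theorem exists_right_sign_eq (M : SignMatching f g T ρ) {p : R[X]} {q : S[X]} {k : ι} (hk : k ∈ T)
    (hfk : f k = p.derivative) (hgk : g k = q.derivative)
    (hconst : p.derivative = 0 → ∀ x y, ρ x y →
      SignType.sign (p.eval x) = SignType.sign (q.eval y))
    (hbreak : ∀ x y, ρ x y → IsBreak f T x → SignType.sign (p.eval x) = SignType.sign (q.eval y))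
    {x : R} {y : S} (hxy : ρ x y) :
    ∃ z, SignConstOn g T (uIcc y z) ∧ SignType.sign (p.eval x) = SignType.sign (q.eval z) := by
  by_cases hx : IsBreak f T x
  · exact ⟨y, signConstOn_of_subsingleton (by simp), hbreak x y hxy hx⟩
  have hp : ∀ z, SignConstOn f T (uIcc x z) →
      SignType.sign (p.derivative.eval z) = SignType.sign (p.derivative.eval x) := fun z hz =>
    hfk ▸ hz k hk z right_mem_uIcc x left_mem_uIcc
  have hq : ∀ z, SignConstOn g T (uIcc y z) →
      SignType.sign (q.derivative.eval z) = SignType.sign (p.derivative.eval x) := fun z hz => by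
    rw [← hgk, hz k hk z right_mem_uIcc y left_mem_uIcc, ← M.sign_eq hxy hk, hfk]
  rcases lt_trichotomy (p.derivative.eval x) 0 with h0 | h0 | h0
  · have := M.exists_right_sign_eq_of_derivative_pos hR hS hT (p := -p) (q := -q) hxy hx
      (fun z hz => by simpa [h0, sign_eq_neg_one_iff] using hp z hz)
      (fun z hz => by simpa [h0, sign_eq_neg_one_iff] using hq z hz)
      (fun b b' h hb => by simpa [Left.sign_neg] using hbreak b b' h hb)
    simpa [Left.sign_neg] using this
  · have hp0 : p.derivative = 0 := by
      by_contra hne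
      exact hx ⟨k, hk, hfk ▸ hne, hfk ▸ h0⟩
    exact ⟨y, signConstOn_of_subsingleton (by simp), hconst hp0 x y hxy⟩
  · exact M.exists_right_sign_eq_of_derivative_pos hR hS hT hxy hx
      (fun z hz => by rw [← sign_eq_one_iff, hp z hz, sign_pos h0])
      (fun z hz => by rw [← sign_eq_one_iff, hq z hz, sign_pos h0]) hbreak

end Cell

theorem sign_eq_of_mem_Icc (M : SignMatching f g T ρ) (hR : PolynomialIVP R) (hS : PolynomialIVP S)
    {p : R[X]} {q : S[X]} {k : ι} (hk : k ∈ T) (hfk : f k = p.derivative) (hgk : g k = q.derivative)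
    {x x' : R} {y y' : S} (h : ρ x y) (h' : ρ x' y')
    (hs : SignType.sign (p.eval x) = SignType.sign (q.eval y))
    (hs' : SignType.sign (p.eval x') = SignType.sign (q.eval y'))
    (hf : SignConstOn f T (Icc x x'))
    (hp : x ≤ x' → SignType.sign (p.eval x) = SignType.sign (p.eval x')) {z : S}
    (hz : z ∈ Icc y y') : SignType.sign (q.eval z) = SignType.sign (q.eval y) := by
  have hle := hz.1.trans hz.2
  have hf' : SignConstOn f T (uIcc x x') := by
    rcases le_total x x' with hxx' | hxx'
    · rwa [uIcc_of_le hxx']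
    · rw [uIcc_of_ge hxx', M.signConstOn_Icc_iff h' h]
      exact signConstOn_of_subsingleton (subsingleton_Icc_of_ge hle)
  have hp' : ∀ w ∈ uIcc x x', SignType.sign (p.derivative.eval w) =
      SignType.sign (p.derivative.eval x) := fun w hw => hfk ▸ hf' k hk w hw x left_mem_uIcc
  have hq' : ∀ w ∈ Icc y y', SignType.sign (q.derivative.eval w) =
      SignType.sign (p.derivative.eval x) := fun w hw => by
    rw [← hgk, (M.signConstOn_Icc_iff h h').1 hf k hk w hw y (left_mem_Icc.2 hle),
      ← M.sign_eq h hk, hfk]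
  rcases le_total 0 (p.derivative.eval x) with h0 | h0
  · exact sign_eq_of_monotoneOn
      (hR.monotoneOn_of_derivative_nonneg ordConnected_uIcc fun w hw => by
        rwa [← sign_nonneg_iff, hp' w hw, sign_nonneg_iff])
      (hS.monotoneOn_of_derivative_nonneg ordConnected_Icc fun w hw => by
        rwa [← sign_nonneg_iff, hq' w hw, sign_nonneg_iff]) hs hs' hp hz
  · have hneg := sign_eq_of_monotoneOn (x := x) (x' := x') (y := y) (y' := y')
      (hR.monotoneOn_of_derivative_nonneg (p := -p) ordConnected_uIcc fun w hw => by
        rwa [derivative_neg, eval_neg, neg_nonneg, ← sign_nonpos_iff, hp' w hw, sign_nonpos_iff])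
      (hS.monotoneOn_of_derivative_nonneg (p := -q) ordConnected_Icc fun w hw => by
        rwa [derivative_neg, eval_neg, neg_nonneg, ← sign_nonpos_iff, hq' w hw, sign_nonpos_iff])
    simp only [eval_neg, Left.sign_neg, neg_inj] at hneg
    exact hneg hs hs' hp hz

theorem signConstOn_insert_Icc (M : SignMatching f g T ρ) (hR : PolynomialIVP R)
    (hS : PolynomialIVP S) {j k : ι} (hk : k ∈ T) (hfk : f k = (f j).derivative)
    (hgk : g k = (g j).derivative) {x x' : R} {y y' : S} (h : ρ x y) (h' : ρ x' y')
    (hs : SignType.sign ((f j).eval x) = SignType.sign ((g j).eval y))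
    (hs' : SignType.sign ((f j).eval x') = SignType.sign ((g j).eval y'))
    (hf : SignConstOn f (insert j T) (Icc x x')) : SignConstOn g (insert j T) (Icc y y') := by
  have hfT : SignConstOn f T (Icc x x') := fun i hi => hf i (mem_insert_of_mem j hi)
  refine forall_mem_insert.2 ⟨fun z hz w hw => ?_, (M.signConstOn_Icc_iff h h').1 hfT⟩
  have hconst : x ≤ x' → SignType.sign ((f j).eval x) = SignType.sign ((f j).eval x') :=
    fun hle => hf j (mem_insert j T) x (left_mem_Icc.2 hle) x' (right_mem_Icc.2 hle)
  rw [M.sign_eq_of_mem_Icc hR hS hk hfk hgk h h' hs hs' hfT hconst hz,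
    M.sign_eq_of_mem_Icc hR hS hk hfk hgk h h' hs hs' hfT hconst hw]

protected theorem insert (M : SignMatching f g T ρ) (hR : PolynomialIVP R) (hS : PolynomialIVP S)
    (hT : T.Finite) {j k : ι} (hk : k ∈ T) (hfk : f k = (f j).derivative)
    (hgk : g k = (g j).derivative)
    (hconst : (f j).derivative = 0 → ∀ x y, ρ x y →
      SignType.sign ((f j).eval x) = SignType.sign ((g j).eval y))
    (hbreak : ∀ x y, ρ x y → IsBreak f T x →
      SignType.sign ((f j).eval x) = SignType.sign ((g j).eval y)) :
    SignMatching f g (insert j T)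
      fun x y => ρ x y ∧ SignType.sign ((f j).eval x) = SignType.sign ((g j).eval y) where
  exists_right x := by
    obtain ⟨y, hxy⟩ := M.exists_right x
    obtain ⟨z, hz, hsign⟩ := M.exists_right_sign_eq hR hS hT hk hfk hgk hconst hbreak hxy
    exact ⟨z, M.congr_right hxy hz, hsign⟩
  exists_left y := by
    obtain ⟨x, hxy⟩ := M.exists_left y
    obtain ⟨z, hz, hsign⟩ := M.symm.exists_right_sign_eq hS hR hT hk hgk hfk
      (fun h0 y x h => (hconst (hfk ▸ M.symm.eq_zero hk (hgk ▸ h0)) x y h).symm)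
      (fun y x h hy => (hbreak x y h ((M.isBreak_iff h).2 hy)).symm) hxy
    exact ⟨z, M.congr_left hxy hz, hsign.symm⟩
  sign_eq h i hi := by
    rcases hi with rfl | hi
    exacts [h.2, M.sign_eq h.1 hi]
  signConstOn_Icc_iff h h' :=
    ⟨M.signConstOn_insert_Icc hR hS hk hfk hgk h.1 h'.1 h.2 h'.2,
      M.symm.signConstOn_insert_Icc hS hR hk hgk hfk h.1 h'.1 h.2.symm h'.2.symm⟩
  congr_left h hx :=
    ⟨M.congr_left h.1 fun i hi => hx i (mem_insert_of_mem j hi),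
      h.2 ▸ hx j (mem_insert j T) _ right_mem_uIcc _ left_mem_uIcc⟩
  congr_right h hy :=
    ⟨M.congr_right h.1 fun i hi => hy i (mem_insert_of_mem j hi),
      h.2.trans (hy j (mem_insert j T) _ left_mem_uIcc _ right_mem_uIcc)⟩

end SignMatching

end SignMatching

section Reduction

theorem exists_finset_closed {α : Type*} {deg : α → ℕ} {f : α → α → Finset α}
    (hf : ∀ a b, ∀ c ∈ f a b, deg c < deg a ∧ deg c < deg b) (P : Finset α) :
    ∃ T, P ⊆ T ∧ ∀ a ∈ T, ∀ b ∈ T, f a b ⊆ T := by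
  classical
  suffices h : ∃ T, P ⊆ T ∧ ∀ a ∈ T, 0 ≤ deg a → ∀ b ∈ T, 0 ≤ deg b → f a b ⊆ T by simpa using h
  refine Nat.decreasingInduction (n := P.sup deg + 1)
    (motive := fun d _ => ∃ T, P ⊆ T ∧ ∀ a ∈ T, d ≤ deg a → ∀ b ∈ T, d ≤ deg b → f a b ⊆ T)
    ?_ ⟨P, subset_rfl, fun a ha hdeg => ?_⟩ (Nat.zero_le _)
  · rintro d - ⟨T, hPT, hT⟩
    refine ⟨T ∪ {a ∈ T | d ≤ deg a}.biUnion fun a => {b ∈ T | d ≤ deg b}.biUnion (f a),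
      hPT.trans Finset.subset_union_left, ?_⟩
    have hold : ∀ c ∈ T ∪ {a ∈ T | d ≤ deg a}.biUnion fun a => {b ∈ T | d ≤ deg b}.biUnion (f a),
        d ≤ deg c → c ∈ T := by
      intro c hc hdc
      rcases Finset.mem_union.1 hc with hc | hc
      · exact hc
      · simp only [Finset.mem_biUnion, Finset.mem_filter] at hc
        obtain ⟨a, ⟨ha, -⟩, b, ⟨hb, -⟩, hc⟩ := hc
        have hlt := hf a b c hc
        exact hT a ha (by omega) b hb (by omega) hc
    intro a ha hda b hb hdb c hc
    refine Finset.mem_union_right _ ?_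
    simp only [Finset.mem_biUnion, Finset.mem_filter]
    exact ⟨a, ⟨hold a ha hda, hda⟩, b, ⟨hold b hb hdb, hdb⟩, hc⟩
  · exact absurd (Finset.le_sup (f := deg) ha) (by omega)

variable {A : Type*} [CommRing A]

theorem exists_pseudoRemainder (p : A[X]) {q : A[X]} (hq : 0 < q.natDegree) :
    ∃ r : A[X], r.natDegree < q.natDegree ∧
      ∃ (k : ℕ) (h : A[X]), C (q.leadingCoeff ^ k) * p = q * h + r := by
  induction hn : p.natDegree using Nat.strong_induction_on generalizing p with
  | _ n ih =>
    rcases lt_or_ge p.natDegree q.natDegree with hlt | hle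
    · exact ⟨p, hlt, 0, 0, by simp⟩
    · obtain ⟨r, hr, k, h, heq⟩ := ih _
        (hn ▸ natDegree_cancelLeads_lt_of_natDegree_le_natDegree hle (hq.trans_le hle))
        (q.cancelLeads p) rfl
      refine ⟨r, hr, k + 1, h + C (q.leadingCoeff ^ k) * (C p.leadingCoeff *
        X ^ (p.natDegree - q.natDegree)), ?_⟩
      rw [cancelLeads, Nat.sub_eq_zero_of_le hle, pow_zero, mul_one] at heq
      rw [pow_succ, C_mul]
      linear_combination heq

/-- A finite family of polynomials closed under the operations of Cohen and Hörmander: derivatives,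
removal of the leading term, and pseudo-division. -/
structure IsReductionClosed (T : Finset A[X]) : Prop where
  derivative_mem {p : A[X]} (hp : p ∈ T) (hdeg : 0 < p.natDegree) : p.derivative ∈ T
  eraseLead_mem {p : A[X]} (hp : p ∈ T) (hdeg : 0 < p.natDegree) : p.eraseLead ∈ T
  exists_pseudoRemainder_mem {p q : A[X]} (hp : p ∈ T) (hq : q ∈ T) (hdeg : 0 < q.natDegree)
    (hle : q.natDegree ≤ p.natDegree) : ∃ r ∈ T, r.natDegree < q.natDegree ∧
      ∃ (k : ℕ) (h : A[X]), C (q.leadingCoeff ^ k) * p = q * h + r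

theorem natDegree_eraseLead_lt {p : A[X]} (hp : 0 < p.natDegree) :
    p.eraseLead.natDegree < p.natDegree :=
  p.eraseLead_natDegree_le.trans_lt (by omega)

theorem exists_isReductionClosed (P : Finset A[X]) : ∃ T, P ⊆ T ∧ IsReductionClosed T := by
  classical
  choose! rem hdeg hrem using fun (p q : A[X]) (hq : 0 < q.natDegree) => exists_pseudoRemainder p hq
  obtain ⟨T, hPT, hT⟩ := exists_finset_closed (deg := natDegree) (f := fun p q =>
    if 0 < q.natDegree ∧ q.natDegree ≤ p.natDegree then {q.derivative, q.eraseLead, rem p q}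
    else ∅) (fun p q r hr => by
      split_ifs at hr with h
      · simp only [Finset.mem_insert, Finset.mem_singleton] at hr
        have : r.natDegree < q.natDegree := by
          rcases hr with rfl | rfl | rfl
          exacts [natDegree_derivative_lt h.1.ne', natDegree_eraseLead_lt h.1, hdeg p q h.1]
        exact ⟨this.trans_le h.2, this⟩
      · simp at hr) P
  have hmem : ∀ p ∈ T, ∀ q ∈ T, 0 < q.natDegree → q.natDegree ≤ p.natDegree →
      q.derivative ∈ T ∧ q.eraseLead ∈ T ∧ rem p q ∈ T := fun p hp q hq hq0 hle => by
    simpa [hq0, hle, Finset.insert_subset_iff] using hT p hp q hq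
  exact ⟨T, hPT, fun hp h => (hmem _ hp _ hp h le_rfl).1, fun hp h => (hmem _ hp _ hp h le_rfl).2.1,
    fun {p q} hp hq h hle => ⟨rem p q, (hmem p hp q hq h hle).2.2, hdeg p q h, hrem p q h⟩⟩

theorem IsReductionClosed.of_insert [DecidableEq A[X]] {T : Finset A[X]} {u : A[X]}
    (h : IsReductionClosed (insert u T)) (hmax : ∀ p ∈ T, p.natDegree ≤ u.natDegree) :
    IsReductionClosed T := by
  have hmem : ∀ {p r}, p ∈ T → r ∈ insert u T → r.natDegree < p.natDegree → r ∈ T := by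
    intro p r hp hr hlt
    exact (Finset.mem_insert.1 hr).resolve_left
      (by rintro rfl; exact (hmax p hp).not_gt hlt)
  refine ⟨fun hp h0 => ?_, fun hp h0 => ?_, fun hp hq h0 hle => ?_⟩
  · exact hmem hp (h.derivative_mem (Finset.mem_insert_of_mem hp) h0)
      (natDegree_derivative_lt h0.ne')
  · exact hmem hp (h.eraseLead_mem (Finset.mem_insert_of_mem hp) h0) (natDegree_eraseLead_lt h0)
  · obtain ⟨r, hr, hlt, hrem⟩ := h.exists_pseudoRemainder_mem (Finset.mem_insert_of_mem hp)
      (Finset.mem_insert_of_mem hq) h0 hle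
    exact ⟨r, hmem hq hr hlt, hlt, hrem⟩

end Reduction

section CohenHormander

variable {A R S : Type*} [CommRing A] [Field R] [LinearOrder R] [Field S] [LinearOrder S]
  {φ : A →+* R} {ψ : A →+* S} {ρ : R → S → Prop}

omit [LinearOrder R] in
theorem map_eq_map_eraseLead {p : A[X]} (h : φ p.leadingCoeff = 0) :
    p.map φ = p.eraseLead.map φ := by
  conv_lhs => rw [← p.eraseLead_add_C_mul_X_pow]
  rw [Polynomial.map_add, Polynomial.map_mul, map_C, h, C_0, zero_mul, add_zero]

omit [LinearOrder R] in
theorem IsReductionClosed.exists_eval_map_eq_zero {T : Finset A[X]} (hT : IsReductionClosed T)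
    {p : A[X]} (hp : p ∈ T) (h0 : p.map φ ≠ 0) {x : R} (hx : (p.map φ).eval x = 0) :
    ∃ q ∈ T, 0 < q.natDegree ∧ φ q.leadingCoeff ≠ 0 ∧ (q.map φ).eval x = 0 := by
  induction hn : p.natDegree using Nat.strong_induction_on generalizing p with
  | _ n ih =>
    have hdeg : 0 < p.natDegree := by
      by_contra! hdeg
      rw [eq_C_of_natDegree_le_zero hdeg] at h0 hx
      simp_all
    by_cases hlc : φ p.leadingCoeff = 0
    · rw [map_eq_map_eraseLead hlc] at h0 hx
      exact ih _ (hn ▸ natDegree_eraseLead_lt hdeg) (hT.eraseLead_mem hp hdeg) h0 hx rfl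
    · exact ⟨p, hp, hdeg, hlc, hx⟩

variable [IsStrictOrderedRing R]

theorem sign_eval_map_eq_of_derivative_eq_zero {T : Finset A[X]} {u : A[X]}
    (hu : 0 < u.natDegree → u.eraseLead ∈ T)
    (M : SignMatching (map φ) (map ψ) (insert 0 (T : Set A[X])) ρ)
    (hlc : SignType.sign (φ u.leadingCoeff) = SignType.sign (ψ u.leadingCoeff))
    (hder : (u.map φ).derivative = 0) {x : R} {y : S} (h : ρ x y) :
    SignType.sign ((u.map φ).eval x) = SignType.sign ((u.map ψ).eval y) := by
  rcases Nat.eq_zero_or_pos u.natDegree with h0 | h0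
  · rw [eq_C_of_natDegree_eq_zero h0] at hlc ⊢
    simpa using hlc
  · have hφ : φ u.leadingCoeff = 0 := by
      rw [leadingCoeff, ← coeff_map]
      refine coeff_eq_zero_of_natDegree_lt ?_
      rwa [derivative_eq_zero.1 hder]
    have hψ : ψ u.leadingCoeff = 0 := by rwa [← sign_eq_zero_iff, ← hlc, sign_eq_zero_iff]
    rw [map_eq_map_eraseLead hφ, map_eq_map_eraseLead hψ]
    exact M.sign_eq h (Or.inr (hu h0))

variable [IsStrictOrderedRing S]

theorem sign_eval_map_eq_of_pseudoRemainder {p q r h : A[X]} {k : ℕ}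
    (hrem : C (q.leadingCoeff ^ k) * p = q * h + r) {x : R} {y : S}
    (hlc : SignType.sign (φ q.leadingCoeff) = SignType.sign (ψ q.leadingCoeff))
    (hlc0 : φ q.leadingCoeff ≠ 0) (hx : (q.map φ).eval x = 0) (hy : (q.map ψ).eval y = 0)
    (hr : SignType.sign ((r.map φ).eval x) = SignType.sign ((r.map ψ).eval y)) :
    SignType.sign ((p.map φ).eval x) = SignType.sign ((p.map ψ).eval y) := by
  have hφ : φ q.leadingCoeff ^ k * (p.map φ).eval x = (r.map φ).eval x := by
    simpa [hx] using congrArg (fun s => (s.map φ).eval x) hrem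
  have hψ : ψ q.leadingCoeff ^ k * (p.map ψ).eval y = (r.map ψ).eval y := by
    simpa [hy] using congrArg (fun s => (s.map ψ).eval y) hrem
  rw [← hφ, ← hψ, sign_mul, sign_mul, sign_pow, sign_pow, ← hlc] at hr
  exact mul_left_cancel₀ (pow_ne_zero k (sign_ne_zero.2 hlc0)) hr

namespace IsReductionClosed

theorem sign_eval_map_eq_of_isBreak [DecidableEq A[X]] {T : Finset A[X]} {u : A[X]}
    (hT : IsReductionClosed (insert u T)) (hmax : ∀ p ∈ T, p.natDegree ≤ u.natDegree)
    (M : SignMatching (map φ) (map ψ) (insert 0 (T : Set A[X])) ρ)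
    (hlc : ∀ p ∈ T, SignType.sign (φ p.leadingCoeff) = SignType.sign (ψ p.leadingCoeff))
    {x : R} {y : S} (h : ρ x y) (hx : IsBreak (map φ) (insert 0 (T : Set A[X])) x) :
    SignType.sign ((u.map φ).eval x) = SignType.sign ((u.map ψ).eval y) := by
  obtain ⟨p, hp, hp0, hpx⟩ := hx
  have hpT : p ∈ T := hp.resolve_left (by rintro rfl; exact hp0 (Polynomial.map_zero φ))
  obtain ⟨q, hq, hdeg, hlc0, hqx⟩ := (hT.of_insert hmax).exists_eval_map_eq_zero hpT hp0 hpx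
  obtain ⟨r, hr, hlt, k, d, hrem⟩ := hT.exists_pseudoRemainder_mem (Finset.mem_insert_self u T)
    (Finset.mem_insert_of_mem hq) hdeg (hmax q hq)
  have hrT : r ∈ T := (Finset.mem_insert.1 hr).resolve_left
    (by rintro rfl; exact (hmax q hq).not_gt hlt)
  have hqy : (q.map ψ).eval y = 0 := by
    rw [← sign_eq_zero_iff, ← M.sign_eq h (Or.inr hq), hqx, sign_zero]
  exact sign_eval_map_eq_of_pseudoRemainder hrem (hlc q hq) hlc0 hqx hqy
    (M.sign_eq h (Or.inr hrT))

theorem exists_signMatching (hR : PolynomialIVP R) (hS : PolynomialIVP S)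
    {T : Finset A[X]} (hT : IsReductionClosed T)
    (hlc : ∀ p ∈ T, SignType.sign (φ p.leadingCoeff) = SignType.sign (ψ p.leadingCoeff)) :
    ∃ ρ, SignMatching (map φ) (map ψ) (insert 0 (T : Set A[X])) ρ := by
  classical
  induction T using Finset.induction_on_max_value (ι := A[X]) natDegree with
  | empty => exact ⟨fun _ _ => True, by constructor <;> simp [SignConstOn]⟩
  | insert u T hu hmax ih =>
    have hlcT := fun p hp => hlc p (Finset.mem_insert_of_mem hp)
    obtain ⟨ρ, M⟩ := ih (hT.of_insert hmax) hlcT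
    have hmem : ∀ {r : A[X]}, r.natDegree < u.natDegree → r ∈ insert u T → r ∈ T :=
      fun hlt hr => (Finset.mem_insert.1 hr).resolve_left (by rintro rfl; exact hlt.false)
    have hderiv : u.derivative ∈ insert 0 (T : Set A[X]) := by
      rcases Nat.eq_zero_or_pos u.natDegree with h0 | h0
      · exact Or.inl (derivative_of_natDegree_zero h0)
      · exact Or.inr (hmem (natDegree_derivative_lt h0.ne')
          (hT.derivative_mem (Finset.mem_insert_self u T) h0))
    rw [Finset.coe_insert, Set.insert_comm]
    exact ⟨_, M.insert hR hS (T.finite_toSet.insert 0) hderiv (derivative_map u φ).symm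
      (derivative_map u ψ).symm
      (fun hder x y => sign_eval_map_eq_of_derivative_eq_zero
        (fun h0 => hmem (natDegree_eraseLead_lt h0)
          (hT.eraseLead_mem (Finset.mem_insert_self u T) h0))
        M (hlc u (Finset.mem_insert_self u T)) hder)
      fun x y => hT.sign_eval_map_eq_of_isBreak hmax M hlcT⟩

end IsReductionClosed

end CohenHormander

section LiftsSigns

universe u v

/-- Tarski–Seidenberg for the ring homomorphism `i : A →+* B`, in the language of points: prescribed
signs at an `R`-point of `B` persist at some `S`-point over any given `S`-point of `A` whose signs
agree with those of the underlying `R`-point of `A` on a finite set. That set depends only on the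
elements of `B`, neither on the points nor on the fields `R` and `S`. -/
def LiftsSigns {A B : Type*} [CommRing A] [CommRing B] (i : A →+* B) : Prop :=
  ∀ P : Finset B, ∃ Q : Finset A,
    ∀ (R : Type u) (S : Type v) [Field R] [LinearOrder R] [IsStrictOrderedRing R] [Field S]
      [LinearOrder S] [IsStrictOrderedRing S], PolynomialIVP R → PolynomialIVP S →
    ∀ (Φ : B →+* R) (ψ : A →+* S),
      (∀ q ∈ Q, SignType.sign (Φ (i q)) = SignType.sign (ψ q)) →
      ∃ Ψ : B →+* S, Ψ.comp i = ψ ∧ ∀ p ∈ P, SignType.sign (Φ p) = SignType.sign (Ψ p)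

variable {A B C : Type*} [CommRing A] [CommRing B] [CommRing C]

theorem LiftsSigns.comp {j : B →+* C} {i : A →+* B} (hj : LiftsSigns.{u, v} j)
    (hi : LiftsSigns.{u, v} i) : LiftsSigns.{u, v} (j.comp i) := by
  intro P
  obtain ⟨Q, hQ⟩ := hj P
  obtain ⟨Q', hQ'⟩ := hi Q
  refine ⟨Q', fun R S _ _ _ _ _ _ hR hS Φ ψ hsign => ?_⟩
  obtain ⟨χ, hχ, hχQ⟩ := hQ' R S hR hS (Φ.comp j) ψ hsign
  obtain ⟨Ψ, hΨ, hΨP⟩ := hQ R S hR hS Φ χ hχQ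
  exact ⟨Ψ, by rw [← RingHom.comp_assoc, hΨ, hχ], hΨP⟩

theorem liftsSigns_of_surjective {i : A →+* B} (hi : Function.Surjective i)
    (hker : (RingHom.ker i).FG) : LiftsSigns.{u, v} i := by
  classical
  intro P
  obtain ⟨G, hG⟩ := hker
  refine ⟨G ∪ P.image (Function.surjInv hi), fun R S _ _ _ _ _ _ _ _ Φ ψ hsign => ?_⟩
  have hle : RingHom.ker i ≤ RingHom.ker ψ := by
    rw [← hG, Ideal.span_le]
    intro g hg
    have hg0 : i g = 0 := RingHom.mem_ker.1 (hG ▸ Ideal.subset_span hg)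
    rw [SetLike.mem_coe, RingHom.mem_ker, ← sign_eq_zero_iff,
      ← hsign g (Finset.mem_union_left _ hg), hg0, map_zero, sign_zero]
  refine ⟨i.liftOfSurjective hi ⟨ψ, hle⟩, i.liftOfRightInverse_comp _ _ _, fun p hp => ?_⟩
  have hp' := hsign _ (Finset.mem_union_right _ (Finset.mem_image_of_mem _ hp))
  rw [Function.surjInv_eq hi p] at hp'
  rw [hp', RingHom.liftOfSurjective, ← i.liftOfRightInverse_comp_apply _ _ ⟨ψ, hle⟩,
    Function.surjInv_eq hi p]

theorem liftsSigns_C : LiftsSigns.{u, v} (Polynomial.C : A →+* A[X]) := by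
  classical
  intro P
  obtain ⟨T, hPT, hT⟩ := exists_isReductionClosed P
  refine ⟨T.image leadingCoeff, fun R S _ _ _ _ _ _ hR hS Φ ψ hsign => ?_⟩
  obtain ⟨ρ, M⟩ := hT.exists_signMatching (φ := Φ.comp Polynomial.C) (ψ := ψ) hR hS fun p hp =>
    hsign _ (Finset.mem_image_of_mem _ hp)
  obtain ⟨y, hy⟩ := M.exists_right (Φ X)
  refine ⟨eval₂RingHom ψ y, by ext; simp, fun p hp => ?_⟩
  have hΦ : Φ p = (p.map (Φ.comp Polynomial.C)).eval (Φ X) := by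
    rw [eval_map, ← hom_eval₂, eval₂_C_X]
  rw [hΦ, M.sign_eq hy (Or.inr (hPT hp)), eval_map, coe_eval₂RingHom]

theorem liftsSigns_of_finitePresentation {A B : Type*} [CommRing A] [CommRing B] {i : A →+* B}
    (hi : i.FinitePresentation) : LiftsSigns.{u, v} i :=
  RingHom.FinitePresentation.polynomial_induction (fun _ _ _ _ i => LiftsSigns.{u, v} i)
    (fun _ _ _ _ i => LiftsSigns.{u, v} i) (fun _ _ => liftsSigns_C)
    (fun _ _ _ _ _ hi hker => liftsSigns_of_surjective hi hker)
    (fun _ _ _ _ _ _ _ _ hi hj => hj.comp hi) i hi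

theorem nonempty_algHom_of_ringHom {K : Type v} [Field K] [LinearOrder K] [IsStrictOrderedRing K]
    (hK : PolynomialIVP K) {R : Type u} [Field R] [LinearOrder R] [IsStrictOrderedRing R]
    (hR : PolynomialIVP R) {B : Type*} [CommRing B] [Algebra K B] [Algebra.FiniteType K B]
    (Φ : B →+* R) : Nonempty (B →ₐ[K] K) := by
  have hfp : (algebraMap K B).FinitePresentation :=
    RingHom.finitePresentation_algebraMap.2 (Algebra.FinitePresentation.of_finiteType.1 ‹_›)
  obtain ⟨Q, hQ⟩ := liftsSigns_of_finitePresentation.{u, v} hfp ∅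
  obtain ⟨Ψ, hΨ, -⟩ := hQ R K hR hK Φ (RingHom.id K) fun q _ =>
    hK.sign_map (Φ.comp (algebraMap K B)) q
  exact ⟨{ Ψ with commutes' := RingHom.congr_fun hΨ }⟩

end LiftsSigns

section SumsOfSquares

theorem isSumSq_map {A B : Type*} [NonAssocSemiring A] [NonAssocSemiring B]
    (f : A →+* B) {s : A} (hs : IsSumSq s) : IsSumSq (f s) := by
  induction hs with
  | zero => rw [map_zero]; exact .zero
  | sq_add a _ ih => rw [map_add, map_mul]; exact .sq_add _ ih

theorem exists_isSumSq_map_eq {A B : Type*} [NonAssocSemiring A] [NonAssocSemiring B]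
    {f : A →+* B} (hf : Function.Surjective f) {s : B} (hs : IsSumSq s) :
    ∃ t, IsSumSq t ∧ f t = s := by
  induction hs with
  | zero => exact ⟨0, .zero, map_zero f⟩
  | sq_add a _ ih =>
    obtain ⟨t, ht, rfl⟩ := ih
    obtain ⟨a, rfl⟩ := hf a
    exact ⟨a * a + t, .sq_add _ ht, by rw [map_add, map_mul]⟩

theorem isSemireal_of_ringHom {A B : Type*} [NonAssocSemiring A] [NonAssocSemiring B]
    [IsSemireal B] (f : A →+* B) : IsSemireal A where
  one_add_ne_zero hs h := IsSemireal.one_add_ne_zero (isSumSq_map f hs) <| by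
    rw [← map_one f, ← map_add, h, map_zero]

theorem isSumSq_iff_exists_sum_sq {A : Type*} [CommSemiring A] {s : A} :
    IsSumSq s ↔ ∃ (l : ℕ) (g : Fin l → A), ∑ i, g i ^ 2 = s := by
  refine ⟨fun hs => ?_, ?_⟩
  · induction hs with
    | zero => exact ⟨0, Fin.elim0, Fin.sum_univ_zero _⟩
    | sq_add a _ ih =>
      obtain ⟨l, g, rfl⟩ := ih
      exact ⟨l + 1, Fin.cons a g, by simp [Fin.sum_univ_succ, sq]⟩
  · rintro ⟨l, g, rfl⟩
    exact IsSumSq.sum fun i _ => (IsSquare.sq (g i)).isSumSq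

end SumsOfSquares

section Orderings

variable {F : Type*} [Field F]

theorem exists_ringPreordering_insert {P : RingPreordering F} {x : F} (hx : -x ∉ P) :
    ∃ P' : RingPreordering F, P ≤ P' ∧ x ∈ P' := by
  refine ⟨.mk' {y | ∃ a ∈ P, ∃ b ∈ P, a + b * x = y} ?_ ?_ ?_ ?_, ?_, ?_⟩
  · rintro _ _ ⟨a, ha, b, hb, rfl⟩ ⟨c, hc, d, hd, rfl⟩
    exact ⟨a + c, add_mem ha hc, b + d, add_mem hb hd, by ring⟩
  · rintro _ _ ⟨a, ha, b, hb, rfl⟩ ⟨c, hc, d, hd, rfl⟩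
    exact ⟨a * c + b * d * (x * x),
      add_mem (mul_mem ha hc) (mul_mem (mul_mem hb hd) (P.mul_self_mem x)), a * d + b * c,
      add_mem (mul_mem ha hd) (mul_mem hb hc), by ring⟩
  · exact fun y => ⟨y * y, P.mul_self_mem y, 0, zero_mem P, by ring⟩
  · rintro ⟨a, ha, b, hb, h⟩
    have hb0 : b ≠ 0 := by
      rintro rfl
      rw [zero_mul, add_zero] at h
      exact P.neg_one_notMem (h ▸ ha)
    refine hx ?_
    rw [show -x = (1 + a) * b⁻¹ by field_simp; linear_combination -h]
    exact mul_mem (add_mem (one_mem P) ha) (RingPreordering.inv_mem hb)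
  · exact fun a ha => ⟨a, ha, 0, zero_mem P, by ring⟩
  · exact ⟨0, zero_mem P, 1, one_mem P, by ring⟩

theorem exists_maximal_ringPreordering [IsSemireal F] :
    ∃ P : RingPreordering F, IsMax P := by
  let P₀ : RingPreordering F :=
    { Subsemiring.sumSq F with
      mem_of_isSquare' := fun hx => Subsemiring.mem_sumSq.2 hx.isSumSq
      neg_one_notMem' := fun h => IsSemireal.not_isSumSq_neg_one F (Subsemiring.mem_sumSq.1 h) }
  have : Nonempty (RingPreordering F) := ⟨P₀⟩
  refine zorn_le_nonempty fun c hc ⟨P, hP⟩ => ?_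
  have hdir : DirectedOn (· ≤ ·) (RingPreordering.toSubsemiring '' c) :=
    directedOn_image.2 hc.directedOn
  have hmem {x : F} : x ∈ sSup (RingPreordering.toSubsemiring '' c) ↔ ∃ P ∈ c, x ∈ P := by
    rw [Subsemiring.mem_sSup_of_directedOn (Set.Nonempty.image _ ⟨P, hP⟩) hdir]
    simp
  refine ⟨{ sSup (RingPreordering.toSubsemiring '' c) with
      mem_of_isSquare' := fun hx => hmem.2 ⟨P, hP, P.mem_of_isSquare hx⟩
      neg_one_notMem' := fun h => ?_ }, fun Q hQ x hx => hmem.2 ⟨Q, hQ, hx⟩⟩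
  obtain ⟨Q, -, hQ⟩ := hmem.1 h
  exact Q.neg_one_notMem hQ

theorem exists_isStrictOrderedRing [IsSemireal F] :
    ∃ _ : LinearOrder F, IsStrictOrderedRing F := by
  classical
  obtain ⟨P, hP⟩ := exists_maximal_ringPreordering (F := F)
  let C : RingCone F :=
    { P.toSubsemiring with
      eq_zero_of_mem_of_neg_mem' := RingPreordering.eq_zero_of_mem_of_neg_mem }
  have : HasMemOrNegMem C := ⟨fun x => or_iff_not_imp_right.2 fun hx => by
    obtain ⟨P', hPP', hx'⟩ := exists_ringPreordering_insert hx
    exact hP hPP' hx'⟩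
  let _ : LinearOrder F := .mkOfAddGroupCone C
  have := IsOrderedRing.mkOfCone C
  exact ⟨‹_›, IsOrderedRing.toIsStrictOrderedRing F⟩

end Orderings

section RealClosure

section SignChange

variable {M : Type*} [Field M] [LinearOrder M] [IsStrictOrderedRing M]

theorem exists_irreducible_dvd_eval_mul_eval_neg {p : M[X]} {a b : M}
    (h : p.eval a * p.eval b < 0) : ∃ q, Irreducible q ∧ q ∣ p ∧ q.eval a * q.eval b < 0 := by
  induction p using WfDvdMonoid.induction_on_irreducible with
  | zero => simp at h
  | unit u hu =>
    obtain ⟨c, -, rfl⟩ := Polynomial.isUnit_iff.1 hu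
    rw [eval_C, eval_C] at h
    exact absurd h (mul_self_nonneg c).not_gt
  | mul p i _ hi ih =>
    by_cases hsign : i.eval a * i.eval b < 0
    · exact ⟨i, hi, dvd_mul_right _ _, hsign⟩
    · rw [eval_mul, eval_mul, mul_mul_mul_comm] at h
      obtain ⟨q, hq, hdvd, hq'⟩ := ih (neg_of_mul_neg_right h (not_lt.1 hsign))
      exact ⟨q, hq, hdvd.mul_left _, hq'⟩

theorem natDegree_pos_of_eval_mul_eval_neg {p : M[X]} {a b : M} (h : p.eval a * p.eval b < 0) :
    0 < p.natDegree := by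
  refine Nat.pos_of_ne_zero fun h0 => h.not_ge ?_
  rw [eq_C_of_natDegree_eq_zero h0, eval_C, eval_C]
  exact mul_self_nonneg _

end SignChange

theorem exists_isSumSq_natDegree_le {k : Type*} [Field k] {p : k[X]} (hp : 0 < p.natDegree)
    {Q : k[X]} (hQ : IsSumSq Q) :
    ∃ Q', IsSumSq Q' ∧ p ∣ Q - Q' ∧ Q'.natDegree ≤ 2 * (p.natDegree - 1) := by
  induction hQ with
  | zero => exact ⟨0, .zero, by simp, by simp⟩
  | @sq_add q s _ ih =>
    obtain ⟨Q', hQ', hdvd, hdeg⟩ := ih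
    refine ⟨q % p * (q % p) + Q', .sq_add _ hQ', ?_, natDegree_add_le_of_degree_le ?_ hdeg⟩
    · have hq : p ∣ q - q % p := ⟨q / p, by linear_combination -EuclideanDomain.div_add_mod q p⟩
      rw [show q * q + s - (q % p * (q % p) + Q') = (q - q % p) * (q + q % p) + (s - Q') by ring]
      exact dvd_add (hq.mul_right _) hdvd
    · have hr := natDegree_mod_lt q hp.ne'
      exact natDegree_mul_le.trans (by lia)

variable {M : Type*} [Field M] [LinearOrder M] [IsStrictOrderedRing M]

theorem not_dvd_one_add_of_eval_mul_eval_neg {p : M[X]} {a b : M}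
    (hp : p.eval a * p.eval b < 0) {Q : M[X]} (hQ : IsSumSq Q) : ¬ p ∣ 1 + Q := by
  induction hn : p.natDegree using Nat.strong_induction_on generalizing p Q with
  | _ n ih =>
  intro hdvd
  have hpos := natDegree_pos_of_eval_mul_eval_neg hp
  obtain ⟨Q', hQ', hdvd', hdeg⟩ := exists_isSumSq_natDegree_le hpos hQ
  obtain ⟨h, hh⟩ : p ∣ 1 + Q' :=
    (dvd_iff_dvd_of_dvd_sub (by simpa using hdvd')).1 hdvd
  have hmul (x : M) : 0 < p.eval x * h.eval x := by
    rw [← eval_mul, ← hh, eval_add, eval_one]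
    exact add_pos_of_pos_of_nonneg one_pos (isSumSq_map (evalRingHom x) hQ').nonneg
  have hsign : h.eval a * h.eval b < 0 := by
    refine neg_of_mul_pos_right ?_ hp.le
    rw [mul_mul_mul_comm]
    exact mul_pos (hmul a) (hmul b)
  have hlt : h.natDegree < p.natDegree := by
    have hp0 : p ≠ 0 := ne_zero_of_natDegree_gt hpos
    have hh0 : h ≠ 0 := ne_zero_of_natDegree_gt (natDegree_pos_of_eval_mul_eval_neg hsign)
    have := natDegree_add_le_of_degree_le (natDegree_one.trans_le zero_le) hdeg
    rw [hh, natDegree_mul hp0 hh0] at this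
    lia
  exact ih _ (hn ▸ hlt) hsign hQ' rfl ⟨p, by rw [hh, mul_comm]⟩

theorem isSemireal_adjoinRoot {p : M[X]} {a b : M} (hp : p.eval a * p.eval b < 0) :
    IsSemireal (AdjoinRoot p) where
  one_add_ne_zero hs h := by
    obtain ⟨Q, hQ, rfl⟩ := exists_isSumSq_map_eq (AdjoinRoot.mk_surjective (g := p)) hs
    rw [← map_one (AdjoinRoot.mk p), ← map_add, AdjoinRoot.mk_eq_zero] at h
    exact not_dvd_one_add_of_eval_mul_eval_neg hp hQ h

theorem polynomialIVP_of_natDegree_eq_one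
    (hM : ∀ p : M[X], Irreducible p → IsSemireal (AdjoinRoot p) → p.natDegree = 1) :
    PolynomialIVP M := by
  intro p a b hab hp
  obtain ⟨q, hirr, hdvd, hq⟩ := exists_irreducible_dvd_eval_mul_eval_neg hp
  have hdeg := hM q hirr (isSemireal_adjoinRoot hq)
  obtain ⟨c, hc⟩ : ∃ c, q.eval c = 0 :=
    exists_root_of_degree_eq_one ((degree_eq_iff_natDegree_eq_of_pos one_pos).2 hdeg)
  have heval (x : M) : q.eval x = q.coeff 1 * (x - c) := by
    rw [eq_X_add_C_of_natDegree_le_one hdeg.le] at hc ⊢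
    simp only [eval_add, eval_mul, eval_C, eval_X, coeff_add, coeff_C_mul, coeff_X_one,
      coeff_C_succ, mul_one, add_zero] at hc ⊢
    linear_combination hc
  have hneg : (a - c) * (b - c) < 0 := by
    refine neg_of_mul_neg_right ?_ (mul_self_nonneg (q.coeff 1))
    rwa [heval, heval, mul_mul_mul_comm] at hq
  obtain ⟨hac, hcb⟩ : a - c < 0 ∧ 0 < b - c := by
    refine (mul_neg_iff.1 hneg).symm.resolve_right fun h => ?_
    linarith [h.1, h.2]
  exact ⟨c, ⟨sub_neg.1 hac, sub_pos.1 hcb⟩, eval_eq_zero_of_dvd_of_eval_eq_zero hdvd hc⟩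

section MaximalSemireal

variable {k Ω : Type*} [Field k] [Field Ω] [Algebra k Ω]

theorem exists_isSumSq_coe_eq_of_directed {ι : Type*} [Nonempty ι] {S : ι → IntermediateField k Ω}
    (hS : Directed (· ≤ ·) S) {s : ↥(⨆ i, S i)} (hs : IsSumSq s) :
    ∃ i, ∃ t : S i, IsSumSq t ∧ (t : Ω) = s := by
  induction hs with
  | zero => exact ⟨Classical.arbitrary ι, 0, .zero, rfl⟩
  | sq_add a _ ih =>
    obtain ⟨i, t, ht, hts⟩ := ih
    obtain ⟨j, ha⟩ : ∃ j, (a : Ω) ∈ S j := by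
      have := a.2
      rwa [← SetLike.mem_coe, IntermediateField.coe_iSup_of_directed hS, mem_iUnion] at this
    obtain ⟨l, hil, hjl⟩ := hS i j
    let b : S l := ⟨a, hjl ha⟩
    refine ⟨l, b * b + IntermediateField.inclusion hil t,
      .sq_add _ (isSumSq_map (IntermediateField.inclusion hil : S i →+* S l) ht), ?_⟩
    simp [b, hts]

theorem isSemireal_iSup_of_directed {ι : Type*} [Nonempty ι] {S : ι → IntermediateField k Ω}
    (hS : Directed (· ≤ ·) S) (hsemireal : ∀ i, IsSemireal (S i)) :
    IsSemireal ↥(⨆ i, S i) where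
  one_add_ne_zero hs h := by
    obtain ⟨i, t, ht, hts⟩ := exists_isSumSq_coe_eq_of_directed hS hs
    refine (hsemireal i).one_add_ne_zero ht (Subtype.ext ?_)
    simpa [hts] using congrArg Subtype.val h

theorem exists_maximal_isSemireal [IsSemireal k] :
    ∃ M : IntermediateField k Ω, Maximal (fun M : IntermediateField k Ω => IsSemireal M) M := by
  have hbot : IsSemireal (⊥ : IntermediateField k Ω) :=
    isSemireal_of_ringHom (IntermediateField.botEquiv k Ω : (⊥ : IntermediateField k Ω) →+* k)
  refine (zorn_le_nonempty₀ {M : IntermediateField k Ω | IsSemireal M}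
    (fun c hc hchain F hF => ⟨sSup c, ?_, fun _ => le_sSup⟩) ⊥ hbot).imp fun _ => And.right
  have : Nonempty c := ⟨F, hF⟩
  rw [sSup_eq_iSup']
  exact isSemireal_iSup_of_directed hchain.directedOn.directed_val fun M => hc M.2

theorem natDegree_eq_one_of_maximal_isSemireal [IsAlgClosed Ω] {M : IntermediateField k Ω}
    (hM : Maximal (fun M : IntermediateField k Ω => IsSemireal M) M) {p : M[X]}
    (hp : Irreducible p) (hpM : IsSemireal (AdjoinRoot p)) : p.natDegree = 1 := by
  obtain ⟨α, hα⟩ := IsAlgClosed.exists_aeval_eq_zero Ω p hp.degree_pos.ne'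
  have := Fact.mk hp
  let φ : AdjoinRoot p →ₐ[M] Ω := AdjoinRoot.liftAlgHom p (Algebra.ofId M Ω) α hα
  let L : IntermediateField k Ω := φ.fieldRange.restrictScalars k
  have hL : IsSemireal L :=
    isSemireal_of_ringHom ((AlgEquiv.ofInjectiveField φ).symm : φ.range →+* AdjoinRoot p)
  have hML : M ≤ L := fun x hx => ⟨algebraMap M _ ⟨x, hx⟩, φ.commutes _⟩
  have hαM : α ∈ M := hM.le_of_ge hL hML ⟨AdjoinRoot.root p, AdjoinRoot.liftAlgHom_root ..⟩
  have hroot : p.IsRoot ⟨α, hαM⟩ :=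
    (algebraMap M Ω).injective <| by
      rwa [map_zero, ← coe_aeval_eq_eval, ← aeval_algebraMap_apply]
  exact natDegree_eq_of_degree_eq_some (degree_eq_one_of_irreducible_of_root hp hroot)

end MaximalSemireal

universe u

theorem exists_ringHom_polynomialIVP (k : Type u) [Field k] [IsSemireal k] :
    ∃ (R : Type u) (_ : Field R) (_ : LinearOrder R) (_ : IsStrictOrderedRing R),
      PolynomialIVP R ∧ Nonempty (k →+* R) := by
  obtain ⟨M, hM⟩ := exists_maximal_isSemireal (k := k) (Ω := AlgebraicClosure k)
  have := hM.prop
  obtain ⟨_, _⟩ := exists_isStrictOrderedRing (F := M)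
  exact ⟨M, inferInstance, _, ‹_›, polynomialIVP_of_natDegree_eq_one fun _ hp hpM =>
    natDegree_eq_one_of_maximal_isSemireal hM hp hpM, ⟨algebraMap k M⟩⟩

end RealClosure

section RealNullstellensatz

universe u v

theorem exists_isSumSq_of_isLocalization {A B : Type*} [CommRing A] [CommRing B] [Algebra A B]
    (S : Submonoid A) [IsLocalization S B] {s : B} (hs : IsSumSq s) :
    ∃ b ∈ S, ∃ t, IsSumSq t ∧ algebraMap A B b ^ 2 * s = algebraMap A B t := by
  induction hs with
  | zero => exact ⟨1, S.one_mem, 0, .zero, by rw [mul_zero, map_zero]⟩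
  | sq_add a _ ih =>
    obtain ⟨b, hb, t, ht, hst⟩ := ih
    obtain ⟨⟨p, q⟩, ha⟩ := IsLocalization.surj S a
    refine ⟨b * q, S.mul_mem hb q.2, b * p * (b * p) + q * q * t,
      .sq_add _ (.mul (.mul_self _) ht), ?_⟩
    simp only [map_mul, map_add, ← hst, ← ha]
    ring

/-- The multiplicative set `1 + ΣA²`, which is inverted in order that the residue fields become
semireal. -/
def oneAddSumSq (A : Type*) [CommRing A] : Submonoid A where
  carrier := {a | ∃ s, IsSumSq s ∧ 1 + s = a}
  one_mem' := ⟨0, .zero, add_zero 1⟩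
  mul_mem' := by
    rintro _ _ ⟨s, hs, rfl⟩ ⟨t, ht, rfl⟩
    exact ⟨s + t + s * t, (hs.add ht).add (hs.mul ht), by ring⟩

theorem isUnit_one_add_of_isLocalization_oneAddSumSq {A B : Type*} [CommRing A] [CommRing B]
    [Algebra A B] [IsLocalization (oneAddSumSq A) B] {s : B} (hs : IsSumSq s) :
    IsUnit (1 + s) := by
  obtain ⟨_, ⟨b, hb, rfl⟩, t, ht, hst⟩ := exists_isSumSq_of_isLocalization (oneAddSumSq A) hs
  refine isUnit_of_mul_isUnit_right (x := algebraMap A B (1 + b) ^ 2) ?_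
  have hmem : (1 + b) ^ 2 + t ∈ oneAddSumSq A :=
    ⟨b + b + b * b + t, ((hb.add hb).add (hb.mul hb)).add ht, by ring⟩
  rw [mul_add, hst, mul_one, ← map_pow, ← map_add]
  exact IsLocalization.map_units B ⟨_, hmem⟩

theorem exists_ringHom_isSemireal (A : Type u) [CommRing A] [IsSemireal A] :
    ∃ (k : Type u) (_ : Field k), IsSemireal k ∧ Nonempty (A →+* k) := by
  let B := Localization (oneAddSumSq A)
  have : Nontrivial B := OreLocalization.nontrivial_iff.2 <| by
    rintro ⟨s, hs, h⟩
    exact IsSemireal.one_add_ne_zero hs h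
  obtain ⟨m, hm⟩ := Ideal.exists_maximal B
  let _ := Ideal.Quotient.field m
  refine ⟨B ⧸ m, inferInstance, ⟨fun {s} hs h => ?_⟩,
    ⟨(Ideal.Quotient.mk m).comp (algebraMap A B)⟩⟩
  obtain ⟨t, ht, rfl⟩ := exists_isSumSq_map_eq (Ideal.Quotient.mk_surjective (I := m)) hs
  have := (isUnit_one_add_of_isLocalization_oneAddSumSq (A := A) ht).map (Ideal.Quotient.mk m)
  rw [map_add, map_one] at this
  exact this.ne_zero h

theorem nonempty_algHom_of_isSemireal {K : Type v} [Field K] [LinearOrder K]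
    [IsStrictOrderedRing K] (hK : PolynomialIVP K) (B : Type u) [CommRing B] [Algebra K B]
    [Algebra.FiniteType K B] [IsSemireal B] : Nonempty (B →ₐ[K] K) := by
  obtain ⟨k, _, _, ⟨i⟩⟩ := exists_ringHom_isSemireal B
  obtain ⟨R, _, _, _, hR, ⟨j⟩⟩ := exists_ringHom_polynomialIVP k
  exact nonempty_algHom_of_ringHom hK hR (j.comp i)

/-- The real radical `{g | g ^ (2 * k) + s ∈ I for some k ≥ 1 and some sum of squares s}` of an
ideal of an arbitrary commutative ring. -/
def realRadicalOf {A : Type*} [CommRing A] (I : Ideal A) : Set A :=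
  {g | ∃ k, 1 ≤ k ∧ ∃ s, IsSumSq s ∧ g ^ (2 * k) + s ∈ I}

theorem isSemireal_away_of_notMem_realRadicalOf {A : Type*} [CommRing A] {I : Ideal A} {f : A}
    (hf : f ∉ realRadicalOf I) (B : Type*) [CommRing B] [Algebra (A ⧸ I) B]
    [IsLocalization.Away (Ideal.Quotient.mk I f) B] : IsSemireal B where
  one_add_ne_zero hs h := hf <| by
    obtain ⟨_, ⟨k, rfl⟩, t, ht, hst⟩ :=
      exists_isSumSq_of_isLocalization (.powers (Ideal.Quotient.mk I f)) hs
    have h0 : algebraMap (A ⧸ I) B ((Ideal.Quotient.mk I f ^ k) ^ 2 + t) = 0 := by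
      rw [map_add, map_pow, ← hst]
      linear_combination algebraMap (A ⧸ I) B (Ideal.Quotient.mk I f ^ k) ^ 2 * h
    obtain ⟨⟨_, m, rfl⟩, hm⟩ :=
      (IsLocalization.map_eq_zero_iff (.powers (Ideal.Quotient.mk I f)) B _).1 h0
    obtain ⟨u, hu, rfl⟩ := exists_isSumSq_map_eq Ideal.Quotient.mk_surjective ht
    refine ⟨m + k + 1, by lia, f ^ (m + 1) * f ^ (m + 1) * u, .mul (.mul_self _) hu,
      Ideal.Quotient.eq_zero_iff_mem.1 ?_⟩
    simp only [map_add, map_mul, map_pow]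
    linear_combination Ideal.Quotient.mk I f ^ (m + 2) * hm

section ZeroLocus

variable {K : Type v} [Field K] [LinearOrder K] [IsStrictOrderedRing K] {σ : Type u}

theorem exists_mem_zeroLocus_aeval_ne_zero (hK : PolynomialIVP K) [Finite σ]
    {I : Ideal (MvPolynomial σ K)} {f : MvPolynomial σ K} (hf : f ∉ realRadicalOf I) :
    ∃ x ∈ MvPolynomial.zeroLocus K I, MvPolynomial.aeval x f ≠ 0 := by
  let B := Localization.Away (Ideal.Quotient.mk I f)
  have : IsSemireal B := isSemireal_away_of_notMem_realRadicalOf hf B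
  have : Algebra.FiniteType K B := .trans (S := MvPolynomial σ K ⧸ I) inferInstance
    (IsLocalization.finiteType_of_monoid_fg (.powers (Ideal.Quotient.mk I f)) B)
  obtain ⟨φ⟩ := nonempty_algHom_of_isSemireal hK B
  let π : MvPolynomial σ K →ₐ[K] B := (IsScalarTower.toAlgHom K _ B).comp (Ideal.Quotient.mkₐ K I)
  have haeval : MvPolynomial.aeval (φ.comp π ∘ MvPolynomial.X) = φ.comp π :=
    (MvPolynomial.aeval_unique _).symm
  refine ⟨φ.comp π ∘ MvPolynomial.X, fun p hp => ?_, ?_⟩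
  · have hπ : π p = 0 := by simp [π, Ideal.Quotient.eq_zero_iff_mem.2 hp]
    rw [haeval, AlgHom.comp_apply, hπ, map_zero]
  · rw [haeval]
    exact ((IsLocalization.Away.algebraMap_isUnit (Ideal.Quotient.mk I f)).map φ).ne_zero

theorem eq_zero_of_pow_add_eq_zero {a s : K} (hs : IsSumSq s) {k : ℕ} (h : a ^ (2 * k) + s = 0) :
    a = 0 := by
  have := (add_eq_zero_iff_of_nonneg ((even_two_mul k).pow_nonneg a) hs.nonneg).1 h
  exact eq_zero_of_pow_eq_zero this.1

theorem realRadicalOf_subset_vanishingIdeal_zeroLocus (I : Ideal (MvPolynomial σ K)) :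
    realRadicalOf I ⊆ MvPolynomial.vanishingIdeal K (MvPolynomial.zeroLocus K I) := by
  rintro f ⟨k, -, s, hs, hmem⟩ x hx
  have hs' := isSumSq_map (MvPolynomial.eval x) hs
  exact eq_zero_of_pow_add_eq_zero (k := k) hs' (by simpa using hx _ hmem)

theorem coe_vanishingIdeal_zeroLocus_eq_realRadicalOf (hK : PolynomialIVP K) [Finite σ]
    (I : Ideal (MvPolynomial σ K)) :
    (MvPolynomial.vanishingIdeal K (MvPolynomial.zeroLocus K I) : Set (MvPolynomial σ K)) =
      realRadicalOf I := by
  refine Subset.antisymm (fun f hf => ?_) (realRadicalOf_subset_vanishingIdeal_zeroLocus I)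
  by_contra hfI
  obtain ⟨x, hx, hfx⟩ := exists_mem_zeroLocus_aeval_ne_zero hK hfI
  exact hfx (hf x hx)

theorem zero_vanishing_bijection_general (hK : PolynomialIVP K) [Finite σ] :
    (∀ I : Ideal (MvPolynomial σ K), (I : Set (MvPolynomial σ K)) = realRadicalOf I →
      MvPolynomial.vanishingIdeal K (MvPolynomial.zeroLocus K I) = I) ∧
    (∀ X : Set (σ → K), (∃ J : Ideal (MvPolynomial σ K), X = MvPolynomial.zeroLocus K J) →
      MvPolynomial.zeroLocus K (MvPolynomial.vanishingIdeal K X) = X) ∧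
    (∀ X : Set (σ → K), (MvPolynomial.vanishingIdeal K X : Set (MvPolynomial σ K)) =
      realRadicalOf (MvPolynomial.vanishingIdeal K X)) ∧
    (∀ I J : Ideal (MvPolynomial σ K), I ≤ J →
      MvPolynomial.zeroLocus K J ⊆ MvPolynomial.zeroLocus K I) ∧
    (∀ X Y : Set (σ → K), X ⊆ Y →
      MvPolynomial.vanishingIdeal K Y ≤ MvPolynomial.vanishingIdeal K X) := by
  have gc := MvPolynomial.zeroLocus_vanishingIdeal_galoisConnection (k := K) (K := K) (σ := σ)
  refine ⟨fun I hI => ?_, ?_, fun X => ?_, fun _ _ => MvPolynomial.zeroLocus_anti_mono,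
    fun _ _ => MvPolynomial.vanishingIdeal_anti_mono⟩
  · exact SetLike.coe_injective
      ((coe_vanishingIdeal_zeroLocus_eq_realRadicalOf hK I).trans hI.symm)
  · rintro _ ⟨J, rfl⟩
    exact gc.l_u_l_eq_l J
  · rw [← coe_vanishingIdeal_zeroLocus_eq_realRadicalOf hK]
    exact congrArg _ (gc.u_l_u_eq_u X).symm

end ZeroLocus

end RealNullstellensatz

theorem realRadical_eq_realRadicalOf (n : ℕ) (I : Ideal (MvPolynomial (Fin n) ℝ)) :
    realRadical n I = realRadicalOf I := by
  simp only [realRadical, realRadicalOf, isSumSq_iff_exists_sum_sq, existsAndEq, true_and]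

/-- `Z` and `𝓘` give an inclusion-reversing bijection between real radically closed
ideals of `ℝ[X₁,...,Xₙ]` and real algebraic subsets of `ℝⁿ`. -/
theorem zero_vanishing_bijection (n : ℕ) :
    (∀ I : Ideal (MvPolynomial (Fin n) ℝ),
        (I : Set (MvPolynomial (Fin n) ℝ)) = realRadical n I →
        vanishingIdeal n (zeroSet n I) = I) ∧
    (∀ X : Set (Fin n → ℝ), (∃ J : Ideal (MvPolynomial (Fin n) ℝ), X = zeroSet n J) →
        zeroSet n (vanishingIdeal n X) = X) ∧
    (∀ X : Set (Fin n → ℝ),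
        ((vanishingIdeal n X : Set (MvPolynomial (Fin n) ℝ)) =
          realRadical n (vanishingIdeal n X))) ∧
    (∀ I J : Ideal (MvPolynomial (Fin n) ℝ), I ≤ J → zeroSet n J ⊆ zeroSet n I) ∧
    (∀ X Y : Set (Fin n → ℝ), X ⊆ Y → vanishingIdeal n Y ≤ vanishingIdeal n X) := by
  simp_rw [realRadical_eq_realRadicalOf]
  exact zero_vanishing_bijection_general polynomialIVP_real
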